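/- Let f be a ternary cubic form over ℂ. The bordered Hessian of f with border (u₁,u₂,u₃) is the zero polynomial in the six variables x₁, x₂, x₃, u₁, u₂, u₃ if and only if f = a₀·a³ for some a₀ ∈ ℂ and some linear form a. -/

import Mathlib

open MvPolynomial

/-- Embed a polynomial in `x₁,x₂,x₃` into the six-variable ring (variables `0,1,2` are
the `x`'s, variables `3,4,5` are the border variables `u₁,u₂,u₃`). -/
noncomputable def toSix (p : MvPolynomial (Fin 3) ℂ) : MvPolynomial (Fin 6) ℂ :=
  rename (fun i : Fin 3 => (⟨(i : ℕ), by omega⟩ : Fin 6)) p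

/-- The bordered Hessian of a ternary form `f` with border `(u₁,u₂,u₃)`, as a polynomial
in the six variables `x₁,x₂,x₃,u₁,u₂,u₃`: the determinant of the 4×4 matrix whose
upper-left 3×3 block is `(∂ᵢ∂ⱼ f)` and whose last row and column are `(u₁,u₂,u₃,0)`. -/
noncomputable def borderedHessian (f : MvPolynomial (Fin 3) ℂ) : MvPolynomial (Fin 6) ℂ :=
  Matrix.det (Matrix.of fun i j : Fin 4 =>
    if hi : (i : ℕ) < 3 then
      if hj : (j : ℕ) < 3 then
        toSix (pderiv ⟨(i : ℕ), hi⟩ (pderiv ⟨(j : ℕ), hj⟩ f))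
      else X (⟨(i : ℕ) + 3, by omega⟩ : Fin 6)
    else
      if hj : (j : ℕ) < 3 then X (⟨(j : ℕ) + 3, by omega⟩ : Fin 6)
      else 0)

/-- A linear form is a homogeneous polynomial of degree 1. -/
def IsLinearForm (a : MvPolynomial (Fin 3) ℂ) : Prop := a.IsHomogeneous 1

/-!
Expanding along the border, the bordered Hessian is `-(uᵀ adj(H) u)`, where `H` is the Hessian
matrix of `f`; as `adj(H)` is symmetric, it vanishes iff all `2 × 2` minors of `H` vanish. If they
do, contracting with `x` and using Euler's identity turns the minors into
`(∂ₘ f) ∂ᵢ(∂ⱼ f) = (∂ⱼ f) ∂ᵢ(∂ₘ f)`, which says that the quotients `∂ⱼ f / ∂ₘ f` are constants `cⱼ`.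
Euler's identity then reads `n f = a ∂ₘ f` with `a = ∑ cⱼ xⱼ`, and iterating it on `∂ₘ f` gives
`n! f = aⁿ ∂ₘⁿ f`, where `∂ₘⁿ f` is a constant.
-/

section Matrix

variable {m n R : Type*} [CommRing R]

/-- All `2 × 2` minors of `A` vanish: over a commutative ring, the determinantal form of
"`A` has rank at most one". -/
def HasVanishingMinors (A : Matrix m n R) : Prop :=
  ∀ i j k l, A i k * A j l = A i l * A j k

lemma hasVanishingMinors_smul_vecMulVec (r : R) (v : m → R) (w : n → R) :
    HasVanishingMinors (r • Matrix.vecMulVec v w) := fun i j k l => by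
  simp only [Matrix.smul_apply, Matrix.vecMulVec_apply, smul_eq_mul]
  ring

lemma hasVanishingMinors_of_lt [LinearOrder m] [LinearOrder n] {A : Matrix m n R}
    (h : ∀ i j k l, i < j → k < l → A i k * A j l = A i l * A j k) : HasVanishingMinors A := by
  intro i j k l
  rcases lt_trichotomy i j with hij | rfl | hij
  · rcases lt_trichotomy k l with hkl | rfl | hkl
    · exact h i j k l hij hkl
    · rfl
    · exact (h i j l k hij hkl).symm
  · exact mul_comm _ _
  · rcases lt_trichotomy k l with hkl | rfl | hkl
    · linear_combination -h j i k l hij hkl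
    · rfl
    · linear_combination h j i l k hij hkl

lemma adjugate_fin_three_eq_zero_iff (A : Matrix (Fin 3) (Fin 3) R) :
    A.adjugate = 0 ↔ HasVanishingMinors A := by
  have hentry (r s : Fin 3) : A.adjugate r s = 0 ↔
      A (s.succAbove 0) (r.succAbove 0) * A (s.succAbove 1) (r.succAbove 1) =
        A (s.succAbove 0) (r.succAbove 1) * A (s.succAbove 1) (r.succAbove 0) := by
    rw [Matrix.adjugate_fin_succ_eq_det_submatrix, (isUnit_neg_one.pow _).mul_right_eq_zero,
      Matrix.det_fin_two, sub_eq_zero]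
    rfl
  constructor
  · intro hadj
    refine hasVanishingMinors_of_lt fun i j k l hij hkl => ?_
    have hskip : ∀ i j : Fin 3, i < j → ∃ s : Fin 3, s.succAbove 0 = i ∧ s.succAbove 1 = j := by
      decide
    obtain ⟨s, rfl, rfl⟩ := hskip i j hij
    obtain ⟨r, rfl, rfl⟩ := hskip k l hkl
    exact (hentry r s).1 (by rw [hadj, Matrix.zero_apply])
  · intro hA
    ext1 r s
    exact (hentry r s).2 (hA _ _ _ _)

lemma det_bordered_fin_three (A : Matrix (Fin 3) (Fin 3) R) (u v : Fin 3 → R) :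
    Matrix.det !![A 0 0, A 0 1, A 0 2, u 0;
                  A 1 0, A 1 1, A 1 2, u 1;
                  A 2 0, A 2 1, A 2 2, u 2;
                  v 0, v 1, v 2, 0] = -(v ⬝ᵥ A.adjugate.mulVec u) := by
  rw [Matrix.det_succ_row_zero, Matrix.adjugate_fin_three]
  simp only [Fin.sum_univ_four, Fin.sum_univ_three, Matrix.det_fin_three, Matrix.submatrix_apply,
    dotProduct, Matrix.mulVec, Matrix.of_apply, Matrix.cons_val, Fin.succAbove, Fin.reduceSucc,
    Fin.reduceCastSucc, Fin.reduceLT, Fin.coe_ofNat_eq_mod, ↓reduceIte]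
  ring

lemma eq_zero_of_isSymm_of_dotProduct_mulVec_self [Fintype n] [IsAddTorsionFree R]
    {M : Matrix n n R} (hM : M.IsSymm)
    (h : ∀ u : n → R, u ⬝ᵥ M.mulVec u = 0) : M = 0 := by
  classical
  ext i j
  have hij := h (Pi.single i 1 + Pi.single j 1)
  have hdiag (k : n) : M k k = 0 := by simpa using h (Pi.single k 1)
  have hsymm : M j i = M i j := hM.apply i j
  have htwo : 2 • M i j = 0 := by
    simpa [Matrix.mulVec_add, hdiag, hsymm, two_mul] using hij
  exact (smul_eq_zero_iff_right two_ne_zero).1 htwo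

end Matrix

/-- With denominators cleared: `D (p / q) = 0` and `E (p / q) = 0` give `E (D p / D q) = 0`. -/
lemma derivation_mul_derivation_derivation_eq {R A : Type*} [CommRing R] [CommRing A] [IsDomain A]
    [Algebra R A] {D E : Derivation R A A} {p q : A} (hq : q ≠ 0)
    (hD : q * D p = p * D q) (hE : q * E p = p * E q) :
    D q * E (D p) = D p * E (D q) := by
  have hED := congrArg E hD
  simp only [Derivation.leibniz, smul_eq_mul] at hED
  apply mul_left_cancel₀ (pow_ne_zero 2 hq)
  linear_combination q * D q * hED + D q ^ 2 * hE - (D q * E q + q * E (D q)) * hD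

section Pderiv

variable {σ R : Type*} [CommRing R]

lemma pderiv_pderiv_comm (i j : σ) (f : MvPolynomial σ R) :
    pderiv i (pderiv j f) = pderiv j (pderiv i f) := by
  classical
  have hcomm : ⁅pderiv (R := R) i, pderiv (R := R) j⁆ = 0 := by
    refine derivation_ext fun k => ?_
    simp [Derivation.commutator_apply, pderiv_X, Pi.single_apply, apply_ite]
  rw [← sub_eq_zero, ← Derivation.commutator_apply, hcomm, Derivation.zero_apply]

lemma exists_eq_C_of_isHomogeneous_zero {f : MvPolynomial σ R} (hf : f.IsHomogeneous 0) :
    ∃ c, f = C c :=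
  ⟨_, totalDegree_eq_zero_iff_eq_C.1 (Nat.le_zero.1 hf.totalDegree_le)⟩

/-- The Hessian matrix `(∂ᵢ∂ⱼ f)` of a polynomial. -/
noncomputable def hessian (f : MvPolynomial σ R) : Matrix σ σ (MvPolynomial σ R) :=
  Matrix.of fun i j => pderiv i (pderiv j f)

lemma hessian_apply (f : MvPolynomial σ R) (i j : σ) :
    hessian f i j = pderiv i (pderiv j f) := rfl

lemma isSymm_hessian (f : MvPolynomial σ R) : (hessian f).IsSymm :=
  Matrix.IsSymm.ext fun i j => pderiv_pderiv_comm j i f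

lemma hessian_C_mul_pow {a : MvPolynomial σ R} {c : σ → R} (hc : ∀ i, pderiv i a = C (c i))
    (a₀ : R) (n : ℕ) :
    hessian (C a₀ * a ^ n) =
      (C (a₀ * n * (n - 1 : ℕ)) * a ^ (n - 2)) •
        Matrix.vecMulVec (fun i => C (c i)) fun j => C (c j) := by
  ext1 i j
  have hfirst : pderiv j (C a₀ * a ^ n) = C (a₀ * n * c j) * a ^ (n - 1) := by
    rw [pderiv_C_mul, pderiv_pow, hc, C_mul, C_mul, C_eq_coe_nat]
    ring
  simp only [hessian_apply, hfirst, Matrix.smul_apply, Matrix.vecMulVec_apply, smul_eq_mul]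
  rw [pderiv_C_mul, pderiv_pow, hc, Nat.sub_sub]
  simp only [C_mul, C_eq_coe_nat]
  ring

lemma hasVanishingMinors_hessian_C_mul_pow {a : MvPolynomial σ R} (ha : a.IsHomogeneous 1)
    (a₀ : R) (n : ℕ) : HasVanishingMinors (hessian (C a₀ * a ^ n)) := by
  choose c hc using fun i => exists_eq_C_of_isHomogeneous_zero (ha.pderiv (i := i))
  rw [hessian_C_mul_pow hc]
  exact hasVanishingMinors_smul_vecMulVec _ _ _

end Pderiv

section Euler

variable {σ R : Type*} [Finite σ] [CommRing R] [IsAddTorsionFree R] {f : MvPolynomial σ R} {n : ℕ}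

lemma exists_pderiv_ne_zero (hf : f.IsHomogeneous (n + 1)) (hf0 : f ≠ 0) :
    ∃ i, pderiv i f ≠ 0 := by
  cases nonempty_fintype σ
  by_contra! hzero
  have euler := hf.sum_X_mul_pderiv
  simp only [hzero, mul_zero, Finset.sum_const_zero] at euler
  exact hf0 ((smul_eq_zero_iff_right n.succ_ne_zero).1 euler.symm)

lemma pderiv_mul_pderiv_pderiv_eq (hf : f.IsHomogeneous n)
    (hminors : HasVanishingMinors (hessian f)) (i j m : σ) :
    pderiv m f * pderiv i (pderiv j f) = pderiv j f * pderiv i (pderiv m f) := by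
  cases nonempty_fintype σ
  rcases eq_or_ne (n - 1) 0 with hn | hn
  · have hconst (k : σ) : pderiv i (pderiv k f) = 0 := by
      obtain ⟨c, hc⟩ := exists_eq_C_of_isHomogeneous_zero (hn ▸ hf.pderiv (i := k))
      rw [hc, pderiv_C]
    rw [hconst, hconst, mul_zero, mul_zero]
  · have euler (j : σ) : (n - 1) • pderiv j f = ∑ k, X k * hessian f k j :=
      hf.pderiv.sum_X_mul_pderiv.symm
    refine smul_right_injective _ hn ?_
    calc (n - 1) • (pderiv m f * hessian f i j)
        = ∑ k, X k * (hessian f k m * hessian f i j) := by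
          simp only [← smul_mul_assoc, euler, Finset.sum_mul, mul_assoc]
      _ = ∑ k, X k * (hessian f k j * hessian f i m) := by simp only [hminors _ i m j]
      _ = (n - 1) • (pderiv j f * hessian f i m) := by
          simp only [← smul_mul_assoc, euler, Finset.sum_mul, mul_assoc]

end Euler

section Homogeneous

variable {σ K : Type*} [Field K] [CharZero K] {f p q : MvPolynomial σ K} {n : ℕ}

lemma exists_eq_C_mul_pow_of_pderiv_eq [Fintype σ] (hf : f.IsHomogeneous n) {c : σ → K} {m : σ}
    (h : ∀ j, pderiv j f = C (c j) * pderiv m f) :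
    ∃ a₀, f = C a₀ * (∑ j, C (c j) * X j) ^ n := by
  induction n generalizing f with
  | zero => simpa using exists_eq_C_of_isHomogeneous_zero hf
  | succ n ih =>
    obtain ⟨b, hb⟩ := ih (f := pderiv m f) hf.pderiv fun j => by
      rw [pderiv_pderiv_comm, h, pderiv_C_mul]
    have euler : (n + 1) • f = (∑ j, C (c j) * X j) * pderiv m f := by
      rw [← hf.sum_X_mul_pderiv, Finset.sum_mul]
      exact Finset.sum_congr rfl fun j _ => by rw [h j]; ring
    have hfactor : (n + 1 : ℕ) • C (b / (n + 1 : ℕ)) = (C b : MvPolynomial σ K) := by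
      rw [← map_nsmul, nsmul_eq_mul, mul_div_cancel₀ b (Nat.cast_ne_zero.2 n.succ_ne_zero)]
    refine ⟨b / (n + 1 : ℕ), smul_right_injective _ n.succ_ne_zero ?_⟩
    dsimp only
    rw [euler, hb, ← smul_mul_assoc, hfactor, pow_succ]
    ring

variable [Finite σ]

lemma exists_eq_C_mul_of_mul_pderiv_eq (hp : p.IsHomogeneous n) (hq : q.IsHomogeneous n)
    (hq0 : q ≠ 0) (h : ∀ i, q * pderiv i p = p * pderiv i q) : ∃ c, p = C c * q := by
  induction n generalizing p q with
  | zero =>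
    obtain ⟨b, rfl⟩ := exists_eq_C_of_isHomogeneous_zero hp
    obtain ⟨c, rfl⟩ := exists_eq_C_of_isHomogeneous_zero hq
    have hc : c ≠ 0 := fun hc => hq0 (by rw [hc, C_0])
    exact ⟨b / c, by rw [← C_mul, div_mul_cancel₀ b hc]⟩
  | succ n ih =>
    obtain ⟨i, hi⟩ := exists_pderiv_ne_zero hq hq0
    obtain ⟨c, hc⟩ := ih hp.pderiv hq.pderiv hi fun k =>
      derivation_mul_derivation_derivation_eq hq0 (h i) (h k)
    refine ⟨c, mul_right_cancel₀ hi ?_⟩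
    linear_combination q * hc - h i

lemma exists_eq_C_mul_pow_of_hasVanishingMinors_hessian (hf : f.IsHomogeneous n)
    (hminors : HasVanishingMinors (hessian f)) :
    ∃ a₀ : K, ∃ a : MvPolynomial σ K, a.IsHomogeneous 1 ∧ f = C a₀ * a ^ n := by
  cases nonempty_fintype σ
  cases n with
  | zero =>
    obtain ⟨c, hc⟩ := exists_eq_C_of_isHomogeneous_zero hf
    exact ⟨c, 0, isHomogeneous_zero _ _ _, by simpa using hc⟩
  | succ n =>
    by_cases hf0 : f = 0
    · exact ⟨0, 0, isHomogeneous_zero _ _ _, by simp [hf0]⟩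
    obtain ⟨m, hm⟩ := exists_pderiv_ne_zero hf hf0
    choose c hc using fun j => exists_eq_C_mul_of_mul_pderiv_eq (hf.pderiv (i := j)) hf.pderiv hm
      fun i => pderiv_mul_pderiv_pderiv_eq hf hminors i j m
    obtain ⟨a₀, ha₀⟩ := exists_eq_C_mul_pow_of_pderiv_eq hf hc
    exact ⟨a₀, _, IsHomogeneous.sum _ _ _ fun j _ => isHomogeneous_C_mul_X (c j) j, ha₀⟩

theorem hasVanishingMinors_hessian_iff (hf : f.IsHomogeneous n) :
    HasVanishingMinors (hessian f) ↔
      ∃ a₀ : K, ∃ a : MvPolynomial σ K, a.IsHomogeneous 1 ∧ f = C a₀ * a ^ n := by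
  constructor
  · exact exists_eq_C_mul_pow_of_hasVanishingMinors_hessian hf
  · rintro ⟨a₀, a, ha, rfl⟩
    exact hasVanishingMinors_hessian_C_mul_pow ha a₀ n

end Homogeneous

section BorderedHessian

lemma toSix_eq_rename : toSix = rename (Fin.castAdd 3 : Fin 3 → Fin 6) := rfl

lemma borderedHessian_eq_neg_dotProduct (f : MvPolynomial (Fin 3) ℂ) :
    borderedHessian f = -((X ∘ Fin.natAdd 3) ⬝ᵥ
      ((hessian f).adjugate.map toSix).mulVec (X ∘ Fin.natAdd 3)) := by
  have hmap : (hessian f).adjugate.map toSix = ((hessian f).map toSix).adjugate := by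
    rw [toSix_eq_rename]
    exact AlgHom.map_adjugate (rename (Fin.castAdd 3 : Fin 3 → Fin 6)) (hessian f)
  rw [hmap, ← det_bordered_fin_three, borderedHessian]
  congr 1
  ext1 i j
  fin_cases i <;> fin_cases j <;> rfl

lemma aeval_append_toSix (u : Fin 3 → MvPolynomial (Fin 3) ℂ) (p : MvPolynomial (Fin 3) ℂ) :
    aeval (Fin.append X u : Fin 6 → MvPolynomial (Fin 3) ℂ) (toSix p) = p := by
  rw [toSix_eq_rename, aeval_rename]
  convert aeval_X_left_apply p using 3
  exact funext (Fin.append_left X u)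

lemma aeval_append_borderedHessian (f : MvPolynomial (Fin 3) ℂ)
    (u : Fin 3 → MvPolynomial (Fin 3) ℂ) :
    aeval (Fin.append X u : Fin 6 → MvPolynomial (Fin 3) ℂ) (borderedHessian f) =
      -(u ⬝ᵥ (hessian f).adjugate.mulVec u) := by
  have happend (i : Fin 3) :
      aeval (Fin.append X u : Fin 6 → MvPolynomial (Fin 3) ℂ) (X (Fin.natAdd 3 i)) = u i :=
    (aeval_X (R := ℂ) _ _).trans (Fin.append_right X u i)
  simp only [borderedHessian_eq_neg_dotProduct, dotProduct, Matrix.mulVec, Matrix.map_apply,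
    Function.comp_apply, map_neg, map_sum, map_mul, aeval_append_toSix, happend]

lemma borderedHessian_eq_zero_iff (f : MvPolynomial (Fin 3) ℂ) :
    borderedHessian f = 0 ↔ HasVanishingMinors (hessian f) := by
  rw [← adjugate_fin_three_eq_zero_iff]
  constructor
  · intro h
    refine eq_zero_of_isSymm_of_dotProduct_mulVec_self (isSymm_hessian f).adjugate fun u => ?_
    rw [← neg_eq_zero, ← aeval_append_borderedHessian, h, map_zero]
  · intro h
    have hmap : (0 : Matrix (Fin 3) (Fin 3) (MvPolynomial (Fin 3) ℂ)).map toSix = 0 :=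
      Matrix.map_zero _ (map_zero (rename _))
    rw [borderedHessian_eq_neg_dotProduct, h, hmap, Matrix.zero_mulVec, dotProduct_zero, neg_zero]

end BorderedHessian

theorem stmt5_general (f : MvPolynomial (Fin 3) ℂ) (n : ℕ) (hf : f.IsHomogeneous n) :
    borderedHessian f = 0 ↔
      ∃ a₀ : ℂ, ∃ a : MvPolynomial (Fin 3) ℂ, IsLinearForm a ∧ f = C a₀ * a ^ n :=
  (borderedHessian_eq_zero_iff f).trans (hasVanishingMinors_hessian_iff hf)

theorem stmt5 (f : MvPolynomial (Fin 3) ℂ) (hf : f.IsHomogeneous 3) :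
    borderedHessian f = 0 ↔
      ∃ a₀ : ℂ, ∃ a : MvPolynomial (Fin 3) ℂ, IsLinearForm a ∧ f = C a₀ * a ^ 3 :=
  stmt5_general f 3 hf
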